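/- Let T and τ be real numbers with 0 < τ ≤ T, let ρ ∈ [0,1), and let A, K ≥ 0. Let g : [0,∞) → [0,∞) be a function such that (i) g(t) ≤ A for all t ∈ [0, 2T], and (ii) for every integer l ≥ 1 and every t ∈ [(l+1)T, (l+2)T], g(t) ≤ ρ · sup_{s ∈ [lT − τ, lT]} g(s) + K. Then g(t) ≤ A + K/(1 − ρ) for every t ≥ 0. -/

import Mathlib

/-! The affine map `x ↦ ρ * x + K` sends every `B ≥ K / (1 - ρ)` to a number at most `B`. Hence the
bound `max A (K / (1 - ρ))`, valid on the initial interval, is passed on from each block of times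
to the next one without deteriorating. -/

open Set

lemma mul_add_le_self_iff {𝕜 : Type*} [Field 𝕜] [LinearOrder 𝕜] [IsStrictOrderedRing 𝕜]
    {ρ B K : 𝕜} (hρ : ρ < 1) : ρ * B + K ≤ B ↔ K / (1 - ρ) ≤ B := by
  rw [div_le_iff₀ (sub_pos.2 hρ), mul_one_sub, mul_comm B, le_sub_iff_add_le']

section Blocks

variable {α : Type*} [LinearOrder α] {x : α} {a : ℕ → α}

lemma forall_ge_of_forall_Icc_succ {P : α → Prop} (ha : IsCofinal (range a))
    (base : ∀ t ∈ Icc x (a 0), P t)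
    (step : ∀ n, (∀ t ∈ Icc x (a n), P t) → ∀ t ∈ Icc (a n) (a (n + 1)), P t) :
    ∀ t, x ≤ t → P t := by
  have forall_Icc (n : ℕ) : ∀ t ∈ Icc x (a n), P t := by
    induction n with
    | zero => exact base
    | succ n ih =>
      intro t ht
      rcases le_total t (a n) with htn | htn
      · exact ih t ⟨ht.1, htn⟩
      · exact step n ih t ⟨htn, ht.2⟩
  intro t ht
  obtain ⟨_, ⟨n, rfl⟩, htn⟩ := ha t
  exact forall_Icc n t ⟨ht, htn⟩

lemma le_max_of_le_mul_sSup_image_add {ρ A K : ℝ} (hρ0 : 0 ≤ ρ) (hρ1 : ρ < 1)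
    {g : α → ℝ} {W : ℕ → Set α} (ha : IsCofinal (range a))
    (hW : ∀ n, (W n).Nonempty) (hWa : ∀ n, W n ⊆ Icc x (a n))
    (base : ∀ t ∈ Icc x (a 0), g t ≤ A)
    (step : ∀ n, ∀ t ∈ Icc (a n) (a (n + 1)), g t ≤ ρ * sSup (g '' W n) + K) :
    ∀ t, x ≤ t → g t ≤ max A (K / (1 - ρ)) := by
  refine forall_ge_of_forall_Icc_succ ha (fun t ht ↦ (base t ht).trans (le_max_left _ _)) ?_
  intro n ih t ht
  have sSup_le : sSup (g '' W n) ≤ max A (K / (1 - ρ)) :=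
    csSup_le ((hW n).image g) (forall_mem_image.2 fun s hs ↦ ih s (hWa n hs))
  calc g t ≤ ρ * sSup (g '' W n) + K := step n t ht
    _ ≤ ρ * max A (K / (1 - ρ)) + K := by gcongr
    _ ≤ max A (K / (1 - ρ)) := (mul_add_le_self_iff hρ1).2 (le_max_right _ _)

end Blocks

lemma isCofinal_range_natCast_add_mul {𝕜 : Type*} [Field 𝕜] [LinearOrder 𝕜]
    [IsStrictOrderedRing 𝕜] [Archimedean 𝕜] (c : 𝕜) {T : 𝕜} (hT : 0 < T) :
    IsCofinal (range fun n : ℕ ↦ (n + c) * T) := by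
  intro t
  obtain ⟨n, hn⟩ := exists_nat_ge (t / T - c)
  exact ⟨_, mem_range_self n, (div_le_iff₀ hT).1 (sub_le_iff_le_add.1 hn)⟩

theorem stmt_8_general {T τ ρ A K : ℝ} (hT : 0 < T) (hτ : 0 ≤ τ) (hτT : τ ≤ T)
    (hρ0 : 0 ≤ ρ) (hρ1 : ρ < 1) {g : ℝ → ℝ}
    (h1 : ∀ t : ℝ, 0 ≤ t → t ≤ 2 * T → g t ≤ A)
    (h2 : ∀ l : ℕ, 1 ≤ l → ∀ t : ℝ, (l + 1 : ℝ) * T ≤ t → t ≤ (l + 2 : ℝ) * T →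
      g t ≤ ρ * sSup (g '' Icc ((l : ℝ) * T - τ) ((l : ℝ) * T)) + K) :
    ∀ t : ℝ, 0 ≤ t → g t ≤ max A (K / (1 - ρ)) := by
  refine le_max_of_le_mul_sSup_image_add (a := fun n ↦ (n + 2) * T)
    (W := fun n ↦ Icc ((n + 1 : ℕ) * T - τ) ((n + 1 : ℕ) * T)) hρ0 hρ1
    (isCofinal_range_natCast_add_mul 2 hT) (fun n ↦ nonempty_Icc.2 (sub_le_self _ hτ)) ?_ ?_ ?_
  · intro n
    have : 0 ≤ n * T := by positivity
    apply Icc_subset_Icc <;> push_cast <;> linarith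
  · intro t ht
    exact h1 t ht.1 (by simpa using ht.2)
  · intro n t ht
    refine h2 (n + 1) n.succ_pos t ?_ ?_ <;> push_cast at ht ⊢ <;> linarith [ht.1, ht.2]

theorem stmt_8 (T τ ρ A K : ℝ) (hτ : 0 < τ) (hτT : τ ≤ T)
    (hρ0 : 0 ≤ ρ) (hρ1 : ρ < 1) (hA : 0 ≤ A) (hK : 0 ≤ K)
    (g : ℝ → ℝ) (hg_nonneg : ∀ t : ℝ, 0 ≤ t → 0 ≤ g t)
    (h1 : ∀ t : ℝ, 0 ≤ t → t ≤ 2 * T → g t ≤ A)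
    (h2 : ∀ l : ℕ, 1 ≤ l → ∀ t : ℝ, (l + 1 : ℝ) * T ≤ t → t ≤ (l + 2 : ℝ) * T →
      g t ≤ ρ * sSup (g '' Set.Icc ((l : ℝ) * T - τ) ((l : ℝ) * T)) + K) :
    ∀ t : ℝ, 0 ≤ t → g t ≤ A + K / (1 - ρ) :=
  fun t ht ↦ (stmt_8_general (hτ.trans_le hτT) hτ.le hτT hρ0 hρ1 h1 h2 t ht).trans
    (max_le_add_of_nonneg hA (div_nonneg hK (sub_nonneg.2 hρ1.le)))
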